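/- Let S be a commutative unital ring of characteristic ℓ ≥ 0, and let UT_2(S) denote the ring of upper triangular 2×2 matrices over S. Then for every n ≥ 2 there is an isomorphism of abelian groups P_n(ℤ)/(P_n(ℤ) ∩ Id(UT_2(S),ℤ)) ≅ (ℤ/ℓℤ) ⊕ (ℤ/ℓℤ)^{(n−2)·2^{n−1}+1}, where ℤ/0ℤ = ℤ. -/

import Mathlib

/-- The free unital associative ring `ℤ⟨x_1, x_2, …⟩` on countably many
(0-indexed) variables. -/
abbrev FA : Type := FreeAlgebra ℤ ℕ

/-- The variable `x_{i+1}` (0-indexed: `X i`). -/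
noncomputable def X (i : ℕ) : FA := FreeAlgebra.ι ℤ i

/-- `P_n(ℤ)`: the additive subgroup of `ℤ⟨X⟩` generated by the multilinear monomials
`x_{σ(1)} x_{σ(2)} ⋯ x_{σ(n)}`, `σ ∈ S_n` (variables 0-indexed). -/
noncomputable def Pn (n : ℕ) : AddSubgroup FA :=
  AddSubgroup.closure
    {w | ∃ σ : Equiv.Perm (Fin n), w = (List.ofFn fun i => X (σ i)).prod}

/-- `Id(R, ℤ)` (inside the free algebra): the elements vanishing under every
substitution of elements of `R` for the variables. -/
noncomputable def IdA (R : Type*) [Ring R] : AddSubgroup FA where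
  carrier := {f | ∀ v : ℕ → R, FreeAlgebra.lift ℤ v f = 0}
  zero_mem' := fun v => map_zero _
  add_mem' := fun hf hg v => by rw [map_add, hf v, hg v, add_zero]
  neg_mem' := fun hf v => by rw [map_neg, hf v, neg_zero]

/-- Left-normed iterated commutator: `commList a [b₁, …, b_k] = [a, b₁, …, b_k]`
(`commList a [] = a`), where `[a,b] = ab - ba`. -/
def commList {A : Type*} [NonUnitalRing A] : A → List A → A
  | a, [] => a
  | a, b :: l => commList (a * b - b * a) l

/-- The left-normed long commutator `[x_{i₁}, …, x_{i_k}]` of a list of variable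
indices (junk value `0` for the empty list). -/
noncomputable def lcWord : List ℕ → FA
  | [] => 0
  | a :: l => commList (X a) l

/-- `Γ_n(ℤ)`: the additive subgroup of `P_n(ℤ)` generated by the proper multilinear
polynomials: products `c₁ c₂ ⋯ c_r` of long commutators (each of length ≥ 2) in which
each of the `n` variables occurs exactly once. -/
noncomputable def Gamma (n : ℕ) : AddSubgroup FA :=
  AddSubgroup.closure
    {w | ∃ L : List (List (Fin n)),
      (∀ l ∈ L, 2 ≤ l.length) ∧ L.flatten.Perm (List.finRange n) ∧
      w = (L.map fun l => lcWord (l.map Fin.val)).prod}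

/-- The two-sided ideal of the (unital) ring `FA` generated by a set `S`:
the additive subgroup generated by all products `a * s * b`, `s ∈ S`. -/
noncomputable def tsIdeal (S : Set FA) : AddSubgroup FA :=
  AddSubgroup.closure {w | ∃ a s b : FA, s ∈ S ∧ w = a * s * b}

/-- Renaming of variables: the endomorphism of `FA` sending `x_i ↦ x_{π(i)}` for the
first `n` variables (and fixing the remaining ones), for `π ∈ S_n`. -/
noncomputable def rename {n : ℕ} (π : Equiv.Perm (Fin n)) : FA →ₐ[ℤ] FA :=
  FreeAlgebra.lift ℤ (fun i => if h : i < n then X (π ⟨i, h⟩) else X i)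

/-- The ring of upper triangular `2 × 2` matrices over `S`, as a subring of `M_2(S)`. -/
def UT2 (S : Type*) [CommRing S] : Subring (Matrix (Fin 2) (Fin 2) S) where
  carrier := {M | M 1 0 = 0}
  zero_mem' := rfl
  one_mem' := Matrix.one_apply_ne (by decide)
  add_mem' := by
    intro a b ha hb
    show (a + b) 1 0 = 0
    simp only [Matrix.add_apply]
    rw [ha, hb, add_zero]
  neg_mem' := by
    intro a ha
    show (-a) 1 0 = 0
    simp only [Matrix.neg_apply]
    rw [ha, neg_zero]
  mul_mem' := by
    intro a b ha hb
    show (a * b) 1 0 = 0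
    rw [Matrix.mul_apply, Fin.sum_univ_two, ha, hb, zero_mul, mul_zero, add_zero]

/-!
A word in `n` letters is a path from `∅` to `univ` in the Boolean lattice, and the upper right entry
of its value at upper triangular matrices is a sum over the edges of this path. So a multilinear
polynomial is an identity of `UT_2(S)` iff its coefficient sum and the flow that it induces on the
edges vanish in `S`. The flow obeys Kirchhoff's law away from `∅` and `univ`, hence these conditions
need only be tested on the coefficient sum and the chords of a spanning tree. The values there are
arbitrary, since the fundamental cycle of every chord is, up to tree edges, a difference of two
words, and the number of chords is `n 2^(n-1) - (2^n - 1) = (n - 2) 2^(n-1) + 1`.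
-/

section Chords

variable {α : Type*} [LinearOrder α]

theorem card_filter_exists_lt_add_one (B : Finset α) :
    (B.filter fun j => ∃ i ∈ B, j < i).card + 1 = B.card + if B = ∅ then 1 else 0 := by
  obtain rfl | hB := B.eq_empty_or_nonempty
  · simp
  have hfilter : (B.filter fun j => ∃ i ∈ B, j < i) = B.erase (B.max' hB) := by
    ext j
    rw [Finset.mem_filter, Finset.mem_erase, and_comm, and_congr_left_iff]
    intro hj
    rw [← (B.le_max' j hj).lt_iff_ne]
    exact ⟨fun ⟨i, hi, hji⟩ => hji.trans_le (B.le_max' i hi), fun h => ⟨_, B.max'_mem hB, h⟩⟩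
  rw [hfilter, Finset.card_erase_add_one (B.max'_mem hB), if_neg hB.ne_empty, add_zero]

/-- The covering edges of the Boolean lattice `Finset α` that lie outside the spanning tree rooted
at `∅`; the pair `(B, j)` with `j ∈ B` encodes the edge from `B \ {j}` to `B`, and the tree joins
every nonempty `B` to `B \ {max B}`. -/
def chords (α : Type*) [Fintype α] [LinearOrder α] : Finset (Finset α × α) :=
  Finset.univ.filter fun e => e.2 ∈ e.1 ∧ ∃ i ∈ e.1, e.2 < i

variable [Fintype α]

theorem mk_mem_chords {B : Finset α} {j : α} : (B, j) ∈ chords α ↔ j ∈ B ∧ ∃ i ∈ B, j < i := by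
  simp [chords]

theorem mk_notMem_chords_of_forall_le {B : Finset α} {j : α} (h : ∀ x ∈ B, x ≤ j) :
    (B, j) ∉ chords α := fun hB =>
  let ⟨_, i, hi, hji⟩ := mk_mem_chords.1 hB
  (h i hi).not_gt hji

theorem sum_card_finset (α : Type*) [Fintype α] :
    ∑ B : Finset α, B.card = Fintype.card α * 2 ^ (Fintype.card α - 1) := by
  rw [← Finset.powerset_univ, Finset.sum_powerset_apply_card fun m => m, Finset.card_univ,
    ← Nat.sum_range_mul_choose]
  simp only [smul_eq_mul, mul_comm]

theorem card_chords_add_two_pow (α : Type*) [Fintype α] [LinearOrder α] :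
    (chords α).card + 2 ^ Fintype.card α = Fintype.card α * 2 ^ (Fintype.card α - 1) + 1 := by
  have hchords : (chords α).card =
      ∑ B : Finset α, (B.filter fun j => ∃ i ∈ B, j < i).card := by
    rw [chords, Finset.card_filter, Fintype.sum_prod_type]
    simp only [← Finset.card_filter, Finset.filter_and, Finset.filter_mem_eq_inter,
      Finset.univ_inter, Finset.inter_filter, Finset.inter_univ]
  calc (chords α).card + 2 ^ Fintype.card α
      = ∑ B : Finset α, ((B.filter fun j => ∃ i ∈ B, j < i).card + 1) := by
        simp [hchords, Finset.sum_add_distrib]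
    _ = ∑ B : Finset α, (B.card + if B = ∅ then 1 else 0) := by
        simp only [card_filter_exists_lt_add_one]
    _ = _ := by simp [Finset.sum_add_distrib, sum_card_finset]

/-- Kirchhoff's law for a weighting of the covering edges of the Boolean lattice `Finset β`: at
every `B` the incoming weight equals the outgoing weight. Edges are encoded as in `chords`. -/
def IsCirculation {β G : Type*} [Fintype β] [DecidableEq β] [AddCommMonoid G]
    (φ : Finset β × β → G) : Prop :=
  ∀ B, ∑ j ∈ B, φ (B, j) = ∑ j ∈ Bᶜ, φ (insert j B, j)

theorem IsCirculation.eq_zero_of_chords {G : Type*} [AddCommMonoid G] {φ : Finset α × α → G}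
    (hφ : IsCirculation φ) (hchords : ∀ e ∈ chords α, φ e = 0) (B : Finset α) :
    ∀ j ∈ B, φ (B, j) = 0 := by
  induction B using WellFoundedGT.induction with
  | ind B ih =>
    intro j hj
    by_cases hch : (B, j) ∈ chords α
    · exact hchords _ hch
    have hmax : ∀ i ∈ B, i ≤ j := by simpa [mk_mem_chords, hj] using hch
    have hout : ∑ i ∈ Bᶜ, φ (insert i B, i) = 0 := Finset.sum_eq_zero fun i hi =>
      ih _ (Finset.ssubset_insert (Finset.mem_compl.1 hi)) i (Finset.mem_insert_self i B)
    have hin : ∑ i ∈ B, φ (B, i) = φ (B, j) := by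
      refine Finset.sum_eq_single_of_mem j hj fun i hi hij => hchords _ ?_
      exact mk_mem_chords.2 ⟨hi, j, hj, (hmax i hi).lt_of_ne hij⟩
    rw [← hin, hφ B, hout]

end Chords

section Words

variable {n : ℕ} {α : Type*} [Fintype α]

/-- The letters of the word `σ 0, σ 1, …` up to and including `j`. -/
def lettersUpTo (σ : Fin n ≃ α) (j : α) : Finset α :=
  Finset.univ.filter fun x => σ.symm x ≤ σ.symm j

/-- The set of the first `k` letters of the word `σ 0, σ 1, …`. -/
def firstLetters (σ : Fin n ≃ α) (k : ℕ) : Finset α :=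
  Finset.univ.filter fun x => (σ.symm x : ℕ) < k

theorem mem_lettersUpTo {σ : Fin n ≃ α} {j x : α} :
    x ∈ lettersUpTo σ j ↔ σ.symm x ≤ σ.symm j := by
  simp [lettersUpTo]

theorem self_mem_lettersUpTo (σ : Fin n ≃ α) (j : α) : j ∈ lettersUpTo σ j :=
  mem_lettersUpTo.2 le_rfl

theorem lettersUpTo_ne_of_notMem (σ : Fin n ≃ α) {B : Finset α} {j : α} (hj : j ∉ B) :
    lettersUpTo σ j ≠ B :=
  fun h => hj (h ▸ self_mem_lettersUpTo σ j)

theorem lettersUpTo_apply (σ : Fin n ≃ α) (k : Fin n) :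
    lettersUpTo σ (σ k) = firstLetters σ (k + 1) := by
  ext x
  simp [lettersUpTo, firstLetters]

theorem firstLetters_succ [DecidableEq α] (σ : Fin n ≃ α) (k : Fin n) :
    firstLetters σ (k + 1) = insert (σ k) (firstLetters σ k) := by
  ext x
  simp [firstLetters, ← Equiv.symm_apply_eq, Fin.ext_iff, le_iff_eq_or_lt]

theorem apply_notMem_firstLetters (σ : Fin n ≃ α) (k : Fin n) : σ k ∉ firstLetters σ k := by
  simp [firstLetters]

theorem lettersUpTo_apply_eq_insert_iff [DecidableEq α] (σ : Fin n ≃ α) (k : Fin n)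
    (B : Finset α) :
    σ k ∉ B ∧ lettersUpTo σ (σ k) = insert (σ k) B ↔ firstLetters σ k = B := by
  rw [lettersUpTo_apply, firstLetters_succ]
  constructor
  · rintro ⟨hB, h⟩
    rw [← Finset.erase_insert (apply_notMem_firstLetters σ k), h, Finset.erase_insert hB]
  · rintro rfl
    exact ⟨apply_notMem_firstLetters σ k, rfl⟩

/-- A word traces a path from `∅` to `univ` in the Boolean lattice. -/
theorem sum_lettersUpTo_eq_add [DecidableEq α] (σ : Fin n ≃ α) (B : Finset α) :
    (∑ j ∈ B, if lettersUpTo σ j = B then (1 : ℤ) else 0) + (if B = ∅ then 1 else 0) =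
      (∑ j ∈ Bᶜ, if lettersUpTo σ j = insert j B then 1 else 0) +
        if B = Finset.univ then 1 else 0 := by
  have hin : (∑ j ∈ B, if lettersUpTo σ j = B then (1 : ℤ) else 0) =
      ∑ k ∈ Finset.range n, if firstLetters σ (k + 1) = B then 1 else 0 := by
    rw [Finset.sum_subset B.subset_univ fun j _ hj =>
      if_neg (lettersUpTo_ne_of_notMem σ hj), ← Equiv.sum_comp σ, Finset.sum_range]
    simp only [lettersUpTo_apply]
  have hout : (∑ j ∈ Bᶜ, if lettersUpTo σ j = insert j B then (1 : ℤ) else 0) =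
      ∑ k ∈ Finset.range n, if firstLetters σ k = B then 1 else 0 := by
    rw [← Finset.univ_inter Bᶜ, ← Finset.sum_ite_mem, ← Equiv.sum_comp σ, Finset.sum_range]
    simp only [← lettersUpTo_apply_eq_insert_iff, Finset.mem_compl, ite_and]
  have hempty : (if B = ∅ then (1 : ℤ) else 0) = if firstLetters σ 0 = B then 1 else 0 := by
    simp [firstLetters, eq_comm]
  have huniv : (if B = Finset.univ then (1 : ℤ) else 0) =
      if firstLetters σ n = B then 1 else 0 := by
    simp [firstLetters, eq_comm]
  rw [hin, hout, hempty, huniv, ← Finset.sum_range_succ, Finset.sum_range_succ']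

theorem mem_lettersUpTo_sort {β : Type*} [LinearOrder β] {f : Fin n → β} {x y : Fin n} :
    x ∈ lettersUpTo (Tuple.sort f) y ↔ f x < f y ∨ f x = f y ∧ x ≤ y := by
  have hsort := Tuple.eq_sort_iff'.1 (rfl : Tuple.sort f = Tuple.sort f)
  rw [mem_lettersUpTo, ← hsort.le_iff_le, Equiv.trans_apply, Equiv.trans_apply,
    Equiv.apply_symm_apply, Equiv.apply_symm_apply]
  exact Prod.Lex.toLex_le_toLex

end Words

section EdgeFlow

variable {n : ℕ}

/-- The flow on the Boolean lattice carried by an integral combination `c` of words: the edge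
`(B, j)`, encoded as in `chords`, receives the total coefficient of the words in which `B` is the
set of letters up to and including `j`. -/
noncomputable def edgeFlow (n : ℕ) :
    (Equiv.Perm (Fin n) → ℤ) →ₗ[ℤ] (Finset (Fin n) × Fin n → ℤ) :=
  Fintype.linearCombination ℤ fun σ e => if lettersUpTo σ e.2 = e.1 then 1 else 0

theorem edgeFlow_apply (c : Equiv.Perm (Fin n) → ℤ) (e : Finset (Fin n) × Fin n) :
    edgeFlow n c e = ∑ σ, c σ * if lettersUpTo σ e.2 = e.1 then 1 else 0 := by
  simp only [edgeFlow, Fintype.linearCombination_apply, Finset.sum_apply, Pi.smul_apply,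
    smul_eq_mul]

theorem edgeFlow_single (σ : Equiv.Perm (Fin n)) (e : Finset (Fin n) × Fin n) :
    edgeFlow n (Pi.single σ 1) e = if lettersUpTo σ e.2 = e.1 then 1 else 0 := by
  rw [edgeFlow, Fintype.linearCombination_apply_single, one_smul]

theorem edgeFlow_eq_zero_of_notMem (c : Equiv.Perm (Fin n) → ℤ) {B : Finset (Fin n)} {j : Fin n}
    (hj : j ∉ B) : edgeFlow n c (B, j) = 0 := by
  rw [edgeFlow_apply]
  exact Finset.sum_eq_zero fun σ _ => by rw [if_neg (lettersUpTo_ne_of_notMem σ hj), mul_zero]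

theorem sum_edgeFlow_eq_add (c : Equiv.Perm (Fin n) → ℤ) (B : Finset (Fin n)) :
    (∑ j ∈ B, edgeFlow n c (B, j)) + (∑ σ, c σ) * (if B = ∅ then 1 else 0) =
      (∑ j ∈ Bᶜ, edgeFlow n c (insert j B, j)) +
        (∑ σ, c σ) * if B = Finset.univ then 1 else 0 := by
  simp only [edgeFlow_apply]
  rw [Finset.sum_comm, Finset.sum_comm (s := Bᶜ)]
  simp only [Finset.sum_mul, ← Finset.mul_sum, ← Finset.sum_add_distrib, ← mul_add,
    sum_lettersUpTo_eq_add]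

theorem isCirculation_edgeFlow {R : Type*} [Ring R] {c : Equiv.Perm (Fin n) → ℤ}
    (hc : ((∑ σ, c σ : ℤ) : R) = 0) : IsCirculation fun e => (edgeFlow n c e : R) := by
  intro B
  have h := congrArg (Int.cast : ℤ → R) (sum_edgeFlow_eq_add c B)
  rw [Int.cast_add, Int.cast_add, Int.cast_mul, Int.cast_mul, hc] at h
  simpa using h

/-- The word listing first `B` and then `Bᶜ`, both in increasing order. -/
def sortedWord (B : Finset (Fin n)) : Equiv.Perm (Fin n) :=
  Tuple.sort fun x => if x ∈ B then 0 else 2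

/-- The word listing first `B \ {j}`, then `j`, then the other letters, each part in increasing
order. -/
def detourWord (B : Finset (Fin n)) (j : Fin n) : Equiv.Perm (Fin n) :=
  Tuple.sort fun x => if x = j then 1 else if x ∈ B then 0 else 2

/-- The difference of two words whose paths in the Boolean lattice enter `B` through `B \ {j}` and
along the spanning tree of `chords` respectively, and share all other non-tree edges. -/
def fundamentalCycle (e : Finset (Fin n) × Fin n) : Equiv.Perm (Fin n) → ℤ :=
  Pi.single (detourWord e.1 e.2) 1 - Pi.single (sortedWord e.1) 1

theorem sum_fundamentalCycle (e : Finset (Fin n) × Fin n) : ∑ σ, fundamentalCycle e σ = 0 := by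
  simp [fundamentalCycle]

theorem le_of_mem_lettersUpTo_sortedWord {B : Finset (Fin n)} {x y : Fin n} (hy : y ∈ B)
    (hx : x ∈ lettersUpTo (sortedWord B) y) : x ≤ y := by
  rw [sortedWord, mem_lettersUpTo_sort] at hx
  grind

theorem le_of_mem_lettersUpTo_detourWord {B : Finset (Fin n)} {j x y : Fin n} (hy : y ∈ B)
    (hyj : y ≠ j) (hx : x ∈ lettersUpTo (detourWord B j) y) : x ≤ y := by
  rw [detourWord, mem_lettersUpTo_sort] at hx
  grind

theorem lettersUpTo_detourWord_self {B : Finset (Fin n)} {j : Fin n} (hj : j ∈ B) :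
    lettersUpTo (detourWord B j) j = B := by
  ext x
  rw [detourWord, mem_lettersUpTo_sort]
  grind

theorem lettersUpTo_detourWord_of_notMem {B : Finset (Fin n)} {j y : Fin n} (hj : j ∈ B)
    (hy : y ∉ B) : lettersUpTo (detourWord B j) y = lettersUpTo (sortedWord B) y := by
  ext x
  rw [detourWord, sortedWord, mem_lettersUpTo_sort, mem_lettersUpTo_sort]
  grind

theorem lettersUpTo_ne_of_mem_chords {σ : Equiv.Perm (Fin n)} {B : Finset (Fin n)} {j : Fin n}
    (hB : (B, j) ∈ chords (Fin n)) (hσ : ∀ x ∈ lettersUpTo σ j, x ≤ j) :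
    lettersUpTo σ j ≠ B := by
  rintro rfl
  exact mk_notMem_chords_of_forall_le hσ hB

theorem edgeFlow_fundamentalCycle {e e' : Finset (Fin n) × Fin n} (he : e ∈ chords (Fin n))
    (he' : e' ∈ chords (Fin n)) :
    edgeFlow n (fundamentalCycle e) e' = if e' = e then 1 else 0 := by
  obtain ⟨B, j⟩ := e
  obtain ⟨C, y⟩ := e'
  have hj : j ∈ B := (mk_mem_chords.1 he).1
  rw [fundamentalCycle, map_sub, Pi.sub_apply, edgeFlow_single, edgeFlow_single]
  by_cases hy : y ∈ B
  · have hsorted : lettersUpTo (sortedWord B) y ≠ C :=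
      lettersUpTo_ne_of_mem_chords he' fun x => le_of_mem_lettersUpTo_sortedWord hy
    obtain rfl | hyj := eq_or_ne y j
    · simp [lettersUpTo_detourWord_self hj, hsorted, eq_comm]
    · have hdetour : lettersUpTo (detourWord B j) y ≠ C :=
        lettersUpTo_ne_of_mem_chords he' fun x => le_of_mem_lettersUpTo_detourWord hy hyj
      simp [hdetour, hsorted, hyj]
  · have hyj : y ≠ j := fun h => hy (h ▸ hj)
    simp [lettersUpTo_detourWord_of_notMem hj hy, hyj]

theorem edgeFlow_refl_of_mem_chords {e : Finset (Fin n) × Fin n} (he : e ∈ chords (Fin n)) :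
    edgeFlow n (Pi.single (Equiv.refl _) 1) e = 0 := by
  rw [edgeFlow_single, if_neg (lettersUpTo_ne_of_mem_chords he fun x => mem_lettersUpTo.1)]

/-- The coordinates, reduced to `R`, of an integral combination of words: the sum of its
coefficients and its flow through the chords. -/
noncomputable def chordCoordinates (R : Type*) [Ring R] (n : ℕ) :
    (Equiv.Perm (Fin n) → ℤ) →+ R × (chords (Fin n) → R) where
  toFun c := ((∑ σ, c σ : ℤ), fun e => (edgeFlow n c e : R))
  map_zero' := by
    ext <;> simp
  map_add' c d := by
    ext <;> simp [Finset.sum_add_distrib]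

theorem chordCoordinates_surjective (R : Type*) [Ring R]
    (hR : Function.Surjective (Int.cast : ℤ → R)) (n : ℕ) :
    Function.Surjective (chordCoordinates R n) := by
  rintro ⟨a, w⟩
  obtain ⟨a, rfl⟩ := hR a
  choose z hz using fun e => hR (w e)
  refine ⟨a • Pi.single (Equiv.refl _) 1 + ∑ e, z e • fundamentalCycle e.1,
    Prod.ext ?_ (funext fun e => ?_)⟩
  · change ((∑ σ, _ : ℤ) : R) = a
    simp only [Pi.add_apply, Finset.sum_apply, Pi.smul_apply, smul_eq_mul, Finset.sum_add_distrib,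
      ← Finset.mul_sum]
    rw [Finset.sum_comm]
    simp [← Finset.mul_sum, sum_fundamentalCycle]
  · change ((edgeFlow n _ _ : ℤ) : R) = w e
    rw [map_add, map_zsmul, map_sum, Pi.add_apply, Pi.smul_apply, Finset.sum_apply,
      edgeFlow_refl_of_mem_chords e.2, Finset.sum_eq_single e]
    · rw [map_zsmul, Pi.smul_apply, edgeFlow_fundamentalCycle e.2 e.2]
      simp [hz]
    · intro e' _ hne
      rw [map_zsmul, Pi.smul_apply, edgeFlow_fundamentalCycle e'.2 e.2,
        if_neg fun h => hne (Subtype.ext h.symm), smul_zero]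
    · simp

theorem chordCoordinates_eq_zero_iff {R : Type*} [Ring R] {c : Equiv.Perm (Fin n) → ℤ} :
    chordCoordinates R n c = 0 ↔
      ((∑ σ, c σ : ℤ) : R) = 0 ∧ ∀ e, (edgeFlow n c e : R) = 0 := by
  refine Prod.ext_iff.trans (and_congr_right fun hc => ⟨fun h => ?_, fun h => funext fun e => h e⟩)
  rintro ⟨B, j⟩
  by_cases hj : j ∈ B
  · exact (isCirculation_edgeFlow hc).eq_zero_of_chords (fun e he => congrFun h ⟨e, he⟩) B j hj
  · rw [edgeFlow_eq_zero_of_notMem c hj, Int.cast_zero]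

end EdgeFlow

section UpperTriangular

variable {S : Type*} [CommRing S] {n : ℕ}

/-- The ring homomorphism reading off the `i`-th diagonal entry. -/
@[simps]
def UT2.diagHom (i : Fin 2) : UT2 S →+* S where
  toFun a := a.1 i i
  map_zero' := rfl
  map_one' := Matrix.one_apply_eq i
  map_add' _ _ := rfl
  map_mul' a b := by
    have ha : a.1 1 0 = 0 := a.2
    have hb : b.1 1 0 = 0 := b.2
    fin_cases i <;> simp [Matrix.mul_apply, ha, hb]

/-- The additive homomorphism reading off the upper right entry. -/
@[simps]
def UT2.cornerHom : UT2 S →+ S where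
  toFun a := a.1 0 1
  map_zero' := rfl
  map_add' _ _ := rfl

theorem UT2.cornerHom_mul (a b : UT2 S) :
    cornerHom (a * b) = diagHom 0 a * cornerHom b + cornerHom a * diagHom 1 b := by
  simp [Matrix.mul_apply]

theorem UT2.eq_zero_iff {a : UT2 S} : a = 0 ↔ (∀ i, diagHom i a = 0) ∧ cornerHom a = 0 := by
  refine ⟨by rintro rfl; simp, fun ⟨hdiag, hcorner⟩ => Subtype.ext ?_⟩
  ext i j
  fin_cases i <;> fin_cases j
  exacts [hdiag 0, hcorner, a.2, hdiag 1]

/-- The contribution to the upper right entry of a product of the factors `u x` that takes the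
upper right entry of `u j`, the factors in `B \ {j}` standing before `u j` and those outside `B`
after it. -/
def cutProd {α : Type*} [Fintype α] [DecidableEq α] (u : α → UT2 S) (B : Finset α) (j : α) : S :=
  ∏ x, if x = j then UT2.cornerHom (u x) else UT2.diagHom (if x ∈ B then 0 else 1) (u x)

theorem UT2.cornerHom_prod_ofFn (u : Fin n → UT2 S) :
    cornerHom (List.ofFn u).prod = ∑ k, cutProd u (Finset.Iic k) k := by
  induction n with
  | zero => simp
  | succ n ih =>
    have hfirst : cutProd u (Finset.Iic 0) 0 =
        cornerHom (u 0) * diagHom 1 (List.ofFn fun i => u i.succ).prod := by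
      simp [cutProd, Fin.prod_univ_succ, map_list_prod, List.map_ofFn, List.prod_ofFn,
        Fin.succ_ne_zero]
    have hlater (k : Fin n) : cutProd u (Finset.Iic k.succ) k.succ =
        diagHom 0 (u 0) * cutProd (fun i => u i.succ) (Finset.Iic k) k := by
      simp [cutProd, Fin.prod_univ_succ, (Fin.succ_ne_zero k).symm]
    rw [List.ofFn_succ, List.prod_cons, cornerHom_mul, ih, Fin.sum_univ_succ, hfirst]
    simp only [hlater, Finset.mul_sum, add_comm]

theorem cutProd_comp_equiv {α : Type*} [Fintype α] [DecidableEq α] (u : α → UT2 S)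
    (σ : Fin n ≃ α) (k : Fin n) :
    cutProd (fun i => u (σ i)) (Finset.Iic k) k = cutProd u (lettersUpTo σ (σ k)) (σ k) := by
  rw [cutProd, cutProd, ← Equiv.prod_comp σ]
  simp [mem_lettersUpTo]

/-- The substitution `x_j ↦ e₁₂`, `x_i ↦ e₁₁` for `i ∈ B \ {j}` and `x_i ↦ e₂₂` for `i ∉ B`, for
which the word `B \ {j}, j, Bᶜ` has a nonzero value. -/
def edgeSubst (S : Type*) [CommRing S] {α : Type*} [DecidableEq α] (B : Finset α) (j x : α) :
    UT2 S :=
  ⟨if x = j then !![0, 1; 0, 0] else if x ∈ B then !![1, 0; 0, 0] else !![0, 0; 0, 1], by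
    split_ifs <;> rfl⟩

theorem cutProd_edgeSubst {α : Type*} [Fintype α] [DecidableEq α] {B C : Finset α} {j k : α}
    (hj : j ∈ B) (hk : k ∈ C) :
    cutProd (edgeSubst S B j) C k = if C = B ∧ k = j then 1 else 0 := by
  split_ifs with h
  · obtain ⟨rfl, rfl⟩ := h
    refine Finset.prod_eq_one fun x _ => ?_
    by_cases hxj : x = k <;> by_cases hxC : x ∈ C <;>
      simp [edgeSubst, hxj, hxC]
  · obtain ⟨x, hx⟩ : ∃ x, ¬(x = k ↔ x = j) ∨ ¬(x ∈ C ↔ x ∈ B) := by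
      by_contra! hcut
      exact h ⟨Finset.ext fun x => (hcut x).2, (hcut k).1.1 rfl⟩
    refine Finset.prod_eq_zero (Finset.mem_univ x) ?_
    have hfalse (hxj : x = j) (hxk : x = k) : False := by simp_all
    by_cases hxj : x = j <;> by_cases hxk : x = k <;> by_cases hxB : x ∈ B <;>
      by_cases hxC : x ∈ C <;> simp_all [edgeSubst]

end UpperTriangular

section Identities

variable {n : ℕ}

/-- The multilinear monomial `x_{σ(1)} ⋯ x_{σ(n)}`. -/
noncomputable def wordMonomial (σ : Equiv.Perm (Fin n)) : FA :=
  (List.ofFn fun i => X (σ i)).prod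

/-- The multilinear polynomial with given coefficients. -/
noncomputable def multilinearPoly (n : ℕ) : (Equiv.Perm (Fin n) → ℤ) →ₗ[ℤ] FA :=
  Fintype.linearCombination ℤ wordMonomial

theorem range_multilinearPoly (n : ℕ) : (multilinearPoly n).range.toAddSubgroup = Pn n := by
  rw [multilinearPoly, Fintype.range_linearCombination, Submodule.span_int_eq_addSubgroupClosure,
    Pn]
  congr 1
  ext w
  exact exists_congr fun σ => eq_comm

theorem lift_wordMonomial {A : Type*} [Ring A] (v : ℕ → A) (σ : Equiv.Perm (Fin n)) :
    FreeAlgebra.lift ℤ v (wordMonomial σ) = (List.ofFn fun i => v (σ i)).prod := by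
  simp [wordMonomial, map_list_prod, List.map_ofFn, Function.comp_def, X]

theorem lift_multilinearPoly {A : Type*} [Ring A] (v : ℕ → A) (c : Equiv.Perm (Fin n) → ℤ) :
    FreeAlgebra.lift ℤ v (multilinearPoly n c) =
      ∑ σ, c σ • (List.ofFn fun i => v (σ i)).prod := by
  simp only [multilinearPoly, Fintype.linearCombination_apply, map_sum, map_zsmul,
    lift_wordMonomial]

variable {S : Type*} [CommRing S]

theorem diagHom_lift_multilinearPoly (i : Fin 2) (v : ℕ → UT2 S) (c : Equiv.Perm (Fin n) → ℤ) :
    UT2.diagHom i (FreeAlgebra.lift ℤ v (multilinearPoly n c)) =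
      (∑ σ, c σ : ℤ) * ∏ x : Fin n, UT2.diagHom i (v x) := by
  have hprod (σ : Equiv.Perm (Fin n)) :
      UT2.diagHom i (List.ofFn fun k => v (σ k)).prod = ∏ x : Fin n, UT2.diagHom i (v x) := by
    rw [map_list_prod, List.map_ofFn, List.prod_ofFn,
      ← Equiv.prod_comp σ fun x => UT2.diagHom i (v x)]
    rfl
  simp only [lift_multilinearPoly, map_sum, map_zsmul, hprod]
  simp only [zsmul_eq_mul, Int.cast_sum, Finset.sum_mul]

theorem cornerHom_lift_multilinearPoly (v : ℕ → UT2 S) (c : Equiv.Perm (Fin n) → ℤ) :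
    UT2.cornerHom (FreeAlgebra.lift ℤ v (multilinearPoly n c)) =
      ∑ e : Finset (Fin n) × Fin n, edgeFlow n c e * cutProd (fun x : Fin n => v x) e.1 e.2 := by
  have hprod (σ : Equiv.Perm (Fin n)) : UT2.cornerHom (List.ofFn fun k => v (σ k)).prod =
      ∑ e : Finset (Fin n) × Fin n,
        (if lettersUpTo σ e.2 = e.1 then 1 else 0) * cutProd (fun x : Fin n => v x) e.1 e.2 := by
    rw [UT2.cornerHom_prod_ofFn,
      Finset.sum_congr rfl fun k _ => cutProd_comp_equiv (fun x : Fin n => v x) σ k,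
      Equiv.sum_comp σ fun j => cutProd (fun x : Fin n => v x) (lettersUpTo σ j) j,
      Fintype.sum_prod_type_right]
    simp
  simp only [lift_multilinearPoly, map_sum, map_zsmul, hprod]
  simp only [zsmul_eq_mul, edgeFlow_apply, Int.cast_sum, Finset.sum_mul, Finset.mul_sum]
  rw [Finset.sum_comm]
  simp

theorem cornerHom_lift_edgeSubst {B : Finset (Fin n)} {j : Fin n} (hj : j ∈ B)
    {v : ℕ → UT2 S} (hv : ∀ x : Fin n, v x = edgeSubst S B j x) (c : Equiv.Perm (Fin n) → ℤ) :
    UT2.cornerHom (FreeAlgebra.lift ℤ v (multilinearPoly n c)) = edgeFlow n c (B, j) := by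
  simp only [cornerHom_lift_multilinearPoly, hv]
  rw [Finset.sum_eq_single (B, j)]
  · simp [cutProd_edgeSubst hj hj]
  · rintro ⟨C, k⟩ - hne
    by_cases hk : k ∈ C
    · rw [cutProd_edgeSubst hj hk, if_neg (by simpa using hne), mul_zero]
    · rw [edgeFlow_eq_zero_of_notMem c hk, Int.cast_zero, zero_mul]
  · simp

theorem multilinearPoly_mem_IdA_iff (c : Equiv.Perm (Fin n) → ℤ) :
    multilinearPoly n c ∈ IdA (UT2 S) ↔
      ((∑ σ, c σ : ℤ) : S) = 0 ∧ ∀ e, (edgeFlow n c e : S) = 0 := by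
  constructor
  · intro h
    refine ⟨?_, fun ⟨B, j⟩ => ?_⟩
    · have hone := (diagHom_lift_multilinearPoly 0 (1 : ℕ → UT2 S) c).symm
      rw [h] at hone
      simpa using hone
    · by_cases hj : j ∈ B
      · rw [← cornerHom_lift_edgeSubst hj
          (v := Function.extend Fin.val (edgeSubst S B j) 0)
          (Fin.val_injective.extend_apply _ _) c, h, map_zero]
      · rw [edgeFlow_eq_zero_of_notMem c hj, Int.cast_zero]
  · rintro ⟨hsum, hflow⟩ v
    rw [UT2.eq_zero_iff]
    simp only [diagHom_lift_multilinearPoly, cornerHom_lift_multilinearPoly, hsum, hflow, zero_mul,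
      Finset.sum_const_zero, implies_true, and_self]

theorem multilinearPoly_mem_IdA_iff_chordCoordinates (S : Type*) [CommRing S] (ℓ : ℕ) [CharP S ℓ]
    (c : Equiv.Perm (Fin n) → ℤ) :
    multilinearPoly n c ∈ IdA (UT2 S) ↔ chordCoordinates (ZMod ℓ) n c = 0 := by
  simp only [multilinearPoly_mem_IdA_iff, chordCoordinates_eq_zero_iff,
    CharP.intCast_eq_zero_iff S ℓ, CharP.intCast_eq_zero_iff (ZMod ℓ) ℓ]

/-- The class of `multilinearPoly n c` corresponds to the coordinates
`chordCoordinates (ZMod ℓ) n c`. -/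
noncomputable def quotientIdAEquiv (S : Type*) [CommRing S] (ℓ : ℕ) [CharP S ℓ] (n : ℕ) :
    (Pn n ⧸ (IdA (UT2 S)).addSubgroupOf (Pn n)) ≃+ ZMod ℓ × (chords (Fin n) → ZMod ℓ) :=
  let polyClass := (QuotientAddGroup.mk' ((IdA (UT2 S)).addSubgroupOf (Pn n))).comp
    ((multilinearPoly n).toAddMonoidHom.codRestrict (Pn n) fun c =>
      range_multilinearPoly n ▸ LinearMap.mem_range_self _ c)
  have hsurj : Function.Surjective polyClass := by
    refine (QuotientAddGroup.mk'_surjective _).comp ?_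
    rintro ⟨f, hf⟩
    rw [← range_multilinearPoly] at hf
    obtain ⟨c, rfl⟩ := hf
    exact ⟨c, rfl⟩
  have hker : polyClass.ker = (chordCoordinates (ZMod ℓ) n).ker := by
    ext c
    rw [AddMonoidHom.mem_ker, AddMonoidHom.mem_ker,
      ← multilinearPoly_mem_IdA_iff_chordCoordinates S ℓ]
    exact QuotientAddGroup.eq_zero_iff _
  (QuotientAddGroup.quotientKerEquivOfSurjective polyClass hsurj).symm.trans <|
    (QuotientAddGroup.quotientAddEquivOfEq hker).trans <|
      QuotientAddGroup.quotientKerEquivOfSurjective _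
        (chordCoordinates_surjective (ZMod ℓ) ZMod.intCast_surjective n)

end Identities

theorem card_chords_fin {n : ℕ} (hn : 2 ≤ n) :
    (chords (Fin n)).card = (n - 2) * 2 ^ (n - 1) + 1 := by
  obtain ⟨m, rfl⟩ := Nat.exists_eq_add_of_le' hn
  have h := card_chords_add_two_pow (Fin (m + 2))
  rw [Fintype.card_fin, Nat.add_succ_sub_one] at h
  rw [Nat.add_sub_cancel, Nat.add_succ_sub_one]
  linarith [pow_succ 2 (m + 1)]

theorem stmt_12 (S : Type) [CommRing S] (ℓ : ℕ) (hS : CharP S ℓ) (n : ℕ) (hn : 2 ≤ n) :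
    Nonempty ((Pn n ⧸ (IdA (UT2 S)).addSubgroupOf (Pn n)) ≃+
      (ZMod ℓ × (Fin ((n - 2) * 2 ^ (n - 1) + 1) → ZMod ℓ))) :=
  let chordsEquiv := (chords (Fin n)).equivFinOfCardEq (card_chords_fin hn)
  ⟨(quotientIdAEquiv S ℓ n).trans <|
    (AddEquiv.refl _).prodCongr (AddEquiv.arrowCongr chordsEquiv (AddEquiv.refl _))⟩
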